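/- Let (E, ρ) be a q-polymatroid with denominator μ. Then for every subspace V of E, ρ(V) = max{ρ(I) : I ≤ V, I μ-independent}. -/

import Mathlib

open Module

/-- A subspace `I` is `μ`-independent in the `q`-polymatroid `(E, ρ)` if
`ρ(J) ≥ dim J / μ` for all subspaces `J ≤ I`. -/
def IsMuIndep {𝔽 E : Type*} [Field 𝔽] [AddCommGroup E] [Module 𝔽 E]
    (μ : ℚ) (ρ : Submodule 𝔽 E → ℚ) (I : Submodule 𝔽 E) : Prop :=
  ∀ J ≤ I, (finrank 𝔽 J : ℚ) / μ ≤ ρ J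

/-- If passing to any proper subspace of `I` lowers an integer-valued submodular function `f` by at
least one, then `f` dominates the dimension on all subspaces of `I`. -/
theorem finrank_le_of_submodular_of_lt {𝔽 E : Type*} [Field 𝔽] [AddCommGroup E] [Module 𝔽 E]
    [FiniteDimensional 𝔽 E] (f : Submodule 𝔽 E → ℕ)
    (hsub : ∀ V W : Submodule 𝔽 E, f (V ⊔ W) + f (V ⊓ W) ≤ f V + f W)
    {I : Submodule 𝔽 E} (hI : ∀ H < I, f H < f I) (J : Submodule 𝔽 E) (hJ : J ≤ I) :
    finrank 𝔽 J ≤ f J := by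
  induction J using WellFoundedLT.induction with
  | ind J ih =>
  rcases eq_or_ne J ⊥ with rfl | hne
  · simp
  obtain ⟨v, hvJ, hv0⟩ := J.exists_mem_ne_zero_of_ne_bot hne
  obtain ⟨H, hH⟩ := exists_isCompl (𝔽 ∙ v)
  have hvH : v ∉ H := fun h => hv0 <|
    (Submodule.disjoint_def.mp hH.disjoint) v (Submodule.mem_span_singleton_self v) h
  have split : ∀ W : Submodule 𝔽 E, v ∈ W → (𝔽 ∙ v) ⊔ H ⊓ W = W := fun W hW => by
    rw [← sup_inf_assoc_of_le H ((Submodule.span_singleton_le_iff_mem v W).mpr hW),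
      hH.sup_eq_top, top_inf_eq]
  have inf_lt : ∀ W : Submodule 𝔽 E, v ∈ W → H ⊓ W < W := fun W hW =>
    lt_of_le_of_ne inf_le_right fun h => hvH (inf_eq_right.mp h hW)
  have hsup : H ⊓ I ⊔ J = I := by
    refine le_antisymm (sup_le inf_le_right hJ) ?_
    conv_lhs => rw [← split I (hJ hvJ)]
    exact sup_le (((Submodule.span_singleton_le_iff_mem v J).mpr hvJ).trans le_sup_right)
      le_sup_left
  have hinf : H ⊓ I ⊓ J = H ⊓ J := by rw [inf_assoc, inf_eq_right.mpr hJ]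
  have hle := hsub (H ⊓ I) J
  rw [hsup, hinf] at hle
  have hdrop := hI _ (inf_lt I (hJ hvJ))
  have hrec := ih _ (inf_lt J hvJ) (inf_le_right.trans hJ)
  have hdim := Submodule.finrank_add_le_finrank_add_finrank (𝔽 ∙ v) (H ⊓ J)
  rw [split J hvJ, finrank_span_singleton hv0] at hdim
  omega

theorem qpm_rank_eq_max_indep
    {𝔽 E : Type*} [Field 𝔽] [Fintype 𝔽] [AddCommGroup E] [Module 𝔽 E]
    [FiniteDimensional 𝔽 E] (ρ : Submodule 𝔽 E → ℚ)
    (hR1 : ∀ V : Submodule 𝔽 E, 0 ≤ ρ V ∧ ρ V ≤ (finrank 𝔽 V : ℚ))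
    (hR2 : ∀ V W : Submodule 𝔽 E, V ≤ W → ρ V ≤ ρ W)
    (hR3 : ∀ V W : Submodule 𝔽 E, ρ (V ⊔ W) + ρ (V ⊓ W) ≤ ρ V + ρ W)
    (μ : ℚ) (hμ : 0 < μ) (hden : ∀ V : Submodule 𝔽 E, ∃ n : ℕ, μ * ρ V = n) :
    ∀ V : Submodule 𝔽 E,
      IsGreatest {x : ℚ | ∃ I ≤ V, IsMuIndep μ ρ I ∧ x = ρ I} (ρ V) := by
  intro V
  refine ⟨?_, fun x ⟨I, hIV, _, hx⟩ => hx ▸ hR2 I V hIV⟩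
  obtain ⟨I, ⟨hIV, hIρ⟩, hmin⟩ := wellFounded_lt.has_min
    {W : Submodule 𝔽 E | W ≤ V ∧ ρ W = ρ V} ⟨V, le_rfl, rfl⟩
  refine ⟨I, hIV, fun J hJ => ?_, hIρ.symm⟩
  choose f hf using hden
  have hsub : ∀ V W : Submodule 𝔽 E, f (V ⊔ W) + f (V ⊓ W) ≤ f V + f W := fun V W => by
    have h := mul_le_mul_of_nonneg_left (hR3 V W) hμ.le
    rw [mul_add, mul_add, hf, hf, hf, hf] at h
    exact_mod_cast h
  have hdrop : ∀ H < I, f H < f I := fun H hH => by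
    have hlt : ρ H < ρ I := lt_of_le_of_ne (hR2 H I hH.le) fun h =>
      hmin H ⟨hH.le.trans hIV, h.trans hIρ⟩ hH
    have h := mul_lt_mul_of_pos_left hlt hμ
    rw [hf, hf] at h
    exact_mod_cast h
  rw [div_le_iff₀' hμ, hf]
  exact_mod_cast finrank_le_of_submodular_of_lt f hsub hdrop J hJ
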